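/- Let T be a theory of unital C*-algebras. The maximal tensor norm predicate P^max is T-definable if and only if: for all families (A_i)_{i∈I} of models of T and all ultrafilters U on I, P^max_{∏_U A_i, n} = lim_U P^max_{A_i, n} for all n. Moreover, in this case each P^max_n is T-equivalent to an existential T-formula. -/

import Mathlib

/-!
Definability gives continuity along ultraproducts by Łoś's theorem
(`IsCStarUltraproduct.tendsto_interp`). The converse produces existential formulas directly, and
rests on two facts: `P^max` can only decrease along a *-homomorphism `A → B`, because commuting
pairs of representations of `B` pull back to `A` (`pmax_map_le`), and C*-algebra ultraproducts
exist (`exists_ultraproduct`).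

Assume that `P^max` commutes with ultraproducts of models, and let `c` be a tuple in a model `A`.
Finitely many approximate *-polynomial relations from the diagram of `(A, c)` force
`P^max ≤ P^max_A(c) + ε` in every model: otherwise an ultraproduct of counterexamples is a target
of a *-homomorphism from `A` under which `P^max` increases (`exists_finite_diagram`). Adding a large
multiple of the norms of these relations to the constant `P^max_A(c) + ε` gives a quantifier-free
`θ(x, y)` with `P^max(x) ≤ inf_y θ(x, y)` in all models, and with `inf_y θ(c, y) ≤ P^max_A(c) + ε`
in `A` (`exists_qfUpperBound`). A second ultraproduct argument shows that finitely many such `θ`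
serve all models and all tuples at once (`exists_finite_upperBounds`); the infimum over `y` of
their minimum is the required existential formula (`exists_existential`).
-/

open scoped TensorProduct
open Filter Topology Function

noncomputable section

/-- A pair of commuting unital *-representations of `A` and `B` on a common C*-algebra;
these correspond exactly to the *-homomorphisms of the algebraic tensor product
`A ⊗[ℂ] B` into C*-algebras. -/
structure CommutingRepPair (A B : Type) [CStarAlgebra A] [CStarAlgebra B] : Type 1 where
  carrier : Type
  [inst : CStarAlgebra carrier]
  fst : A →⋆ₐ[ℂ] carrier
  snd : B →⋆ₐ[ℂ] carrier
  commutes : ∀ a b, Commute (fst a) (snd b)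

attribute [instance] CommutingRepPair.inst

/-- The *-homomorphism `A ⊗[ℂ] B → C` induced by a commuting pair of representations. -/
def CommutingRepPair.hom {A B : Type} [CStarAlgebra A] [CStarAlgebra B]
    (p : CommutingRepPair A B) : A ⊗[ℂ] B →ₐ[ℂ] p.carrier :=
  Algebra.TensorProduct.lift p.fst.toAlgHom p.snd.toAlgHom p.commutes

/-- The maximal tensor norm on `A ⊗[ℂ] B`: the supremum of `‖π x‖` over all
*-homomorphisms `π` of the algebraic tensor product into a C*-algebra, equivalently over
all pairs of commuting unital *-representations of `A` and `B`. -/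
def maxNorm (A B : Type) [CStarAlgebra A] [CStarAlgebra B] (x : A ⊗[ℂ] B) : ℝ :=
  sSup {r : ℝ | ∃ p : CommutingRepPair A B, r = ‖p.hom x‖}

/-- A family of elements of C*-algebras is (uniformly norm-)bounded. -/
def Bdd {I : Type} {A : I → Type} [∀ i, CStarAlgebra (A i)] (f : ∀ i, A i) : Prop :=
  ∃ M : ℝ, ∀ i, ‖f i‖ ≤ M

/-- `π : (∀ i, A i) → B` realizes `B` as the C*-algebra ultraproduct `∏_U A_i`, i.e. as
the quotient of the ℓ∞-product of the `A i` by the ideal of bounded families whose norms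
tend to `0` along `U`:  `π` is a unital *-homomorphism on bounded families, every element
of `B` lifts to a bounded family (with control of norms), and the norm of `π f` is the
`U`-limit of the norms `‖f i‖`.  This data determines `B` uniquely up to isometric
*-isomorphism. -/
structure IsCStarUltraproduct {I : Type} (U : Ultrafilter I) (A : I → Type)
    [∀ i, CStarAlgebra (A i)] (B : Type) [CStarAlgebra B]
    (π : (∀ i, A i) → B) : Prop where
  map_one : π 1 = 1
  map_add : ∀ f g, Bdd f → Bdd g → π (f + g) = π f + π g
  map_mul : ∀ f g, Bdd f → Bdd g → π (f * g) = π f * π g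
  map_star : ∀ f, Bdd f → π (star f) = star (π f)
  map_smul : ∀ (c : ℂ) f, Bdd f → π (c • f) = c • π f
  norm_eq : ∀ f, Bdd f → Tendsto (fun i => ‖f i‖) (U : Filter I) (nhds ‖π f‖)
  surj : ∀ b : B, ∃ f, (∀ i, ‖f i‖ ≤ ‖b‖) ∧ π f = b

/-- *-polynomial terms in `n` variables over `ℂ`: the terms of the continuous-logic
language of (unital) C*-algebras. -/
inductive CTerm : ℕ → Type
  | var {n : ℕ} : Fin n → CTerm n
  | one {n : ℕ} : CTerm n
  | add {n : ℕ} : CTerm n → CTerm n → CTerm n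
  | mul {n : ℕ} : CTerm n → CTerm n → CTerm n
  | star {n : ℕ} : CTerm n → CTerm n
  | smul {n : ℕ} : ℂ → CTerm n → CTerm n

/-- Evaluation of a *-polynomial term in a C*-algebra. -/
def CTerm.eval {A : Type} [CStarAlgebra A] : ∀ {n : ℕ}, CTerm n → (Fin n → A) → A
  | _, CTerm.var i, a => a i
  | _, CTerm.one, _ => 1
  | _, CTerm.add s t, a => CTerm.eval s a + CTerm.eval t a
  | _, CTerm.mul s t, a => CTerm.eval s a * CTerm.eval t a
  | _, CTerm.star t, a => Star.star (CTerm.eval t a)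
  | _, CTerm.smul c t, a => c • CTerm.eval t a

/-- Formulas of the continuous-logic language of (unital) C*-algebras in `n` free
variables (all variables ranging over the closed unit ball): atomic formulas `‖t‖` for
*-polynomial terms `t`, closed under continuous combinations and the quantifiers
`sup` and `inf` over the unit ball. -/
inductive Formula : ℕ → Type
  | atom {n : ℕ} : CTerm n → Formula n
  | comb {n k : ℕ} (u : (Fin k → ℝ) → ℝ) (hu : Continuous u)
      (phis : Fin k → Formula n) : Formula n
  | sup {n : ℕ} : Formula (n + 1) → Formula n
  | inf {n : ℕ} : Formula (n + 1) → Formula n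

/-- The interpretation of a formula in a (unital) C*-algebra, the quantified variables
ranging over the closed unit ball. -/
def Formula.interp (A : Type) [CStarAlgebra A] :
    ∀ {n : ℕ}, Formula n → (Fin n → A) → ℝ
  | _, Formula.atom t, a => ‖t.eval a‖
  | _, Formula.comb u _ phis, a => u fun j => (phis j).interp A a
  | _, Formula.sup phi, a => ⨆ b : {x : A // ‖x‖ ≤ 1}, phi.interp A (Fin.snoc a b.1)
  | _, Formula.inf phi, a => ⨅ b : {x : A // ‖x‖ ≤ 1}, phi.interp A (Fin.snoc a b.1)

/-- A sentence is a formula with no free variables. -/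
abbrev Sentence := Formula 0

/-- A theory of (unital) C*-algebras: a set of sentences, each imposed as the condition
`σ = 0`. -/
abbrev CStarTheory := Set Sentence

/-- `A` is a model of the theory `T`. -/
def Models (A : Type) [CStarAlgebra A] (T : CStarTheory) : Prop :=
  ∀ σ ∈ T, σ.interp A finZeroElim = 0

/-- Quantifier-free formulas: those built without the quantifiers `sup` and `inf`. -/
inductive Formula.IsQF : ∀ {n : ℕ}, Formula n → Prop
  | atom {n : ℕ} (t : CTerm n) : (Formula.atom t).IsQF
  | comb {n k : ℕ} (u : (Fin k → ℝ) → ℝ) (hu : Continuous u) (phis : Fin k → Formula n) :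
      (∀ j, (phis j).IsQF) → (Formula.comb u hu phis).IsQF

/-- Existential formulas: a string of `inf`-quantifiers (existential quantifiers of
continuous logic) applied to a quantifier-free formula. -/
inductive Formula.IsExistential : ∀ {n : ℕ}, Formula n → Prop
  | of_qf {n : ℕ} {phi : Formula n} : phi.IsQF → phi.IsExistential
  | inf {n : ℕ} {phi : Formula (n + 1)} : phi.IsExistential → phi.inf.IsExistential

/-- The maximal tensor norm predicate `P^max` is `T`-definable: for each `n`, the
`T`-function `(a, b) ↦ ‖Σ a_k ⊗ b_k‖_max` (on `2n`-tuples from the unit ball) is realized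
by a `T`-formula, i.e. it is a uniform-over-models-of-`T` limit of interpretations of
formulas. -/
def MaxDefinableOver (T : CStarTheory) : Prop :=
  ∀ (n : ℕ) (ε : ℝ), 0 < ε → ∃ phi : Formula (n + n),
    ∀ (A : Type) [CStarAlgebra A], Models A T →
      ∀ a b : Fin n → A, (∀ k, ‖a k‖ ≤ 1) → (∀ k, ‖b k‖ ≤ 1) →
        |maxNorm A A (∑ k, a k ⊗ₜ[ℂ] b k) - phi.interp A (Fin.append a b)| ≤ ε

/-- For all families `(A i)` of models of `T` and all ultrafilters `U`,
`P^max_{∏_U A_i, n} = lim_U P^max_{A_i, n}` for all `n`. -/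
def MaxUltraContinuous (T : CStarTheory) : Prop :=
  ∀ (I : Type) (U : Ultrafilter I) (A : I → Type) [∀ i, CStarAlgebra (A i)],
    (∀ i, Models (A i) T) →
    ∀ (B : Type) [CStarAlgebra B] (π : (∀ i, A i) → B), IsCStarUltraproduct U A B π →
    ∀ (n : ℕ) (f g : Fin n → ∀ i, A i),
      (∀ k i, ‖f k i‖ ≤ 1) → (∀ k i, ‖g k i‖ ≤ 1) →
      Tendsto (fun i => maxNorm (A i) (A i) (∑ k, f k i ⊗ₜ[ℂ] g k i)) (U : Filter I)
        (nhds (maxNorm B B (∑ k, π (f k) ⊗ₜ[ℂ] π (g k))))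

/-! ### Ultraproducts of C*-algebras -/

section Ultraproduct

variable {I : Type} (U : Ultrafilter I) (A : I → Type) [∀ i, CStarAlgebra (A i)]

/-- The *-subalgebra of bounded families in `∏ A i`, i.e. the `ℓ∞`-product of the `A i`. -/
def bddSubalgebra : StarSubalgebra ℂ (∀ i, A i) where
  carrier := {f | Bdd f}
  mul_mem' := by
    rintro f g ⟨M, hM⟩ ⟨N, hN⟩
    exact ⟨M * N, fun i => (norm_mul_le _ _).trans
      (mul_le_mul (hM i) (hN i) (norm_nonneg _) ((norm_nonneg _).trans (hM i)))⟩
  add_mem' := by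
    rintro f g ⟨M, hM⟩ ⟨N, hN⟩
    exact ⟨M + N, fun i => (norm_add_le _ _).trans (add_le_add (hM i) (hN i))⟩
  algebraMap_mem' := by
    intro r
    refine ⟨‖r‖ * 1, fun i => ?_⟩
    rw [Pi.algebraMap_apply, Algebra.algebraMap_eq_smul_one, norm_smul]
    have h1 : ‖(1 : A i)‖ ≤ 1 := by
      rcases subsingleton_or_nontrivial (A i) with h | h
      · simp [Subsingleton.elim (1 : A i) 0]
      · simp
    gcongr
  star_mem' := by
    rintro f ⟨M, hM⟩
    exact ⟨M, fun i => by simpa using hM i⟩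

/-- A copy of the bounded families, to be equipped with the seminorm `lim_U ‖f i‖` (rather
than with the topology it inherits from the product). -/
def BddFam (_ : Ultrafilter I) (A : I → Type) [∀ i, CStarAlgebra (A i)] : Type :=
  bddSubalgebra A

namespace BddFam

instance : Ring (BddFam U A) := inferInstanceAs (Ring (bddSubalgebra A))
instance : Algebra ℂ (BddFam U A) := inferInstanceAs (Algebra ℂ (bddSubalgebra A))
instance : StarRing (BddFam U A) := inferInstanceAs (StarRing (bddSubalgebra A))
instance : StarModule ℂ (BddFam U A) := inferInstanceAs (StarModule ℂ (bddSubalgebra A))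

variable {U A}

theorem exists_lim (f : BddFam U A) :
    ∃ r : ℝ, Tendsto (fun i => ‖f.1 i‖) (U : Filter I) (𝓝 r) := by
  obtain ⟨M, hM⟩ := f.2
  obtain ⟨r, -, hr⟩ := (isCompact_Icc (a := (0 : ℝ)) (b := M)).ultrafilter_le_nhds
    (U.map fun i => ‖f.1 i‖) (by
      rw [le_principal_iff, Ultrafilter.coe_map, mem_map]
      exact univ_mem' fun i => ⟨norm_nonneg _, hM i⟩)
  exact ⟨r, hr⟩

/-- The seminorm `lim_U ‖f i‖` on bounded families. -/
def limNorm (f : BddFam U A) : ℝ := (exists_lim f).choose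

theorem tendsto_limNorm (f : BddFam U A) :
    Tendsto (fun i => ‖f.1 i‖) (U : Filter I) (𝓝 (limNorm f)) := (exists_lim f).choose_spec

theorem limNorm_le {f : BddFam U A} {c : ℝ} (h : ∀ i, ‖f.1 i‖ ≤ c) : limNorm f ≤ c :=
  le_of_tendsto (tendsto_limNorm f) (Eventually.of_forall h)

theorem limNorm_eq {f : BddFam U A} {c : ℝ}
    (h : Tendsto (fun i => ‖f.1 i‖) (U : Filter I) (𝓝 c)) : limNorm f = c :=
  tendsto_nhds_unique (tendsto_limNorm f) h

/-- `lim_U ‖f i‖` as an additive group seminorm. -/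
def limSeminorm : AddGroupSeminorm (BddFam U A) where
  toFun := limNorm
  map_zero' := limNorm_eq (by
    have : (fun i => ‖(0 : BddFam U A).1 i‖) = fun _ => 0 := by
      funext i; exact norm_zero
    rw [this]; exact tendsto_const_nhds)
  add_le' f g := le_of_tendsto_of_tendsto' (tendsto_limNorm (f + g))
    ((tendsto_limNorm f).add (tendsto_limNorm g)) fun i => norm_add_le (f.1 i) (g.1 i)
  neg' f := limNorm_eq (by
    have : (fun i => ‖(-f).1 i‖) = fun i => ‖f.1 i‖ := by
      funext i; exact norm_neg (f.1 i)
    rw [this]; exact tendsto_limNorm f)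

instance : SeminormedRing (BddFam U A) :=
  { (limSeminorm (U := U) (A := A)).toSeminormedAddCommGroup,
    (inferInstance : Ring (BddFam U A)) with
    norm_mul_le := fun f g => le_of_tendsto_of_tendsto' (tendsto_limNorm (f * g))
      ((tendsto_limNorm f).mul (tendsto_limNorm g)) fun i => norm_mul_le (f.1 i) (g.1 i) }

theorem norm_def (f : BddFam U A) : ‖f‖ = limNorm f := rfl

instance : NormedAlgebra ℂ (BddFam U A) :=
  { (inferInstance : Algebra ℂ (BddFam U A)) with
    norm_smul_le := fun c f => le_of_tendsto_of_tendsto' (tendsto_limNorm (c • f))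
      ((tendsto_limNorm f).const_mul ‖c‖) fun i => norm_smul_le c (f.1 i) }

theorem norm_star' (f : BddFam U A) : ‖star f‖ = ‖f‖ := limNorm_eq (by
  have : (fun i => ‖(star f).1 i‖) = fun i => ‖f.1 i‖ := by
    funext i; exact norm_star (f.1 i)
  rw [this]; exact tendsto_limNorm f)

theorem norm_star_mul (f : BddFam U A) : ‖star f * f‖ = ‖f‖ * ‖f‖ := limNorm_eq (by
  have : (fun i => ‖(star f * f).1 i‖) = fun i => ‖f.1 i‖ * ‖f.1 i‖ := by
    funext i; exact CStarRing.norm_star_mul_self (x := f.1 i)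
  rw [this]; exact (tendsto_limNorm f).mul (tendsto_limNorm f))

/-- The C*-algebra ultraproduct: bounded families modulo those with `lim_U ‖f i‖ = 0`. -/
abbrev Quot (U : Ultrafilter I) (A : I → Type) [∀ i, CStarAlgebra (A i)] : Type :=
  SeparationQuotient (BddFam U A)

theorem insep_iff (f g : BddFam U A) : Inseparable f g ↔ ‖f - g‖ = 0 := by
  rw [Metric.inseparable_iff, dist_eq_norm]

instance : Star (Quot U A) where
  star := SeparationQuotient.lift (fun f => SeparationQuotient.mk (star f)) (by
    intro f g h
    rw [SeparationQuotient.mk_eq_mk, insep_iff, ← star_sub, norm_star', ← insep_iff]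
    exact h)

theorem star_mk (f : BddFam U A) :
    star (SeparationQuotient.mk f : Quot U A) = SeparationQuotient.mk (star f) := rfl

instance : StarRing (Quot U A) where
  star_involutive := by
    intro x
    obtain ⟨f, rfl⟩ := SeparationQuotient.surjective_mk x
    rw [star_mk, star_mk, star_star]
  star_mul := by
    intro x y
    obtain ⟨f, rfl⟩ := SeparationQuotient.surjective_mk x
    obtain ⟨g, rfl⟩ := SeparationQuotient.surjective_mk y
    rw [← SeparationQuotient.mk_mul, star_mk, star_mk, star_mk, ← SeparationQuotient.mk_mul,
      star_mul]
  star_add := by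
    intro x y
    obtain ⟨f, rfl⟩ := SeparationQuotient.surjective_mk x
    obtain ⟨g, rfl⟩ := SeparationQuotient.surjective_mk y
    rw [← SeparationQuotient.mk_add, star_mk, star_mk, star_mk, ← SeparationQuotient.mk_add,
      star_add]

instance : StarModule ℂ (Quot U A) where
  star_smul := by
    intro c x
    obtain ⟨f, rfl⟩ := SeparationQuotient.surjective_mk x
    rw [← SeparationQuotient.mk_smul, star_mk, star_mk, ← SeparationQuotient.mk_smul, star_smul]

instance : CStarRing (Quot U A) where
  norm_mul_self_le := by
    intro x
    obtain ⟨f, rfl⟩ := SeparationQuotient.surjective_mk x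
    rw [star_mk, ← SeparationQuotient.mk_mul, SeparationQuotient.norm_mk,
      SeparationQuotient.norm_mk, norm_star_mul]

/-- Every element of the ultraproduct lifts to a family bounded by its norm: truncate an
arbitrary lift `f` to `min(1, ‖x‖ / ‖f i‖) • f i`. -/
theorem exists_lift (x : Quot U A) :
    ∃ f : BddFam U A, (∀ i, ‖f.1 i‖ ≤ ‖x‖) ∧ SeparationQuotient.mk f = x := by
  obtain ⟨f, rfl⟩ := SeparationQuotient.surjective_mk x
  rw [SeparationQuotient.norm_mk]
  set r := ‖f‖ with hr
  have hr0 : 0 ≤ r := norm_nonneg f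
  -- where `f i = 0` the quotient `r / ‖f i‖` is `0`, and the truncation is still `0`
  let g : ∀ i, A i := fun i => ((min 1 (r / ‖f.1 i‖) : ℝ) : ℂ) • f.1 i
  have hgn : ∀ i, ‖g i‖ ≤ r := by
    intro i
    have h0 : 0 ≤ min 1 (r / ‖f.1 i‖) := le_min zero_le_one (by positivity)
    simp only [g, norm_smul, Complex.norm_real, Real.norm_of_nonneg h0]
    rcases eq_or_ne ‖f.1 i‖ 0 with h | h
    · rw [h, mul_zero]; exact hr0
    · calc _ ≤ (r / ‖f.1 i‖) * ‖f.1 i‖ := by gcongr; exact min_le_right _ _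
        _ = r := div_mul_cancel₀ _ h
  have hsub : ∀ i, ‖g i - f.1 i‖ ≤ max 0 (‖f.1 i‖ - r) := by
    intro i
    rcases le_total ‖f.1 i‖ r with h | h
    · rcases eq_or_ne ‖f.1 i‖ 0 with h' | h'
      · have h'' : f.1 i = 0 := norm_eq_zero.mp h'
        simp [g, h'']
      · have : 1 ≤ r / ‖f.1 i‖ := by
          rw [le_div_iff₀ (lt_of_le_of_ne (norm_nonneg _) h'.symm)]; linarith
        simp [g, min_eq_left this]
    · rcases eq_or_ne ‖f.1 i‖ 0 with h' | h'
      · have h'' : f.1 i = 0 := norm_eq_zero.mp h'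
        simp [g, h'']
      · have hpos : 0 < ‖f.1 i‖ := lt_of_le_of_ne (norm_nonneg _) h'.symm
        have h1 : r / ‖f.1 i‖ ≤ 1 := (div_le_one hpos).mpr h
        have : g i - f.1 i = ((r / ‖f.1 i‖ - 1 : ℝ) : ℂ) • f.1 i := by
          simp only [g, min_eq_right h1]
          push_cast
          rw [sub_smul, one_smul]
        rw [this, norm_smul, Complex.norm_real, Real.norm_of_nonpos (by linarith)]
        refine le_trans (le_of_eq ?_) (le_max_right _ _)
        field_simp
        ring
  let G : BddFam U A := ⟨g, r, hgn⟩
  refine ⟨G, hgn, ?_⟩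
  rw [SeparationQuotient.mk_eq_mk, insep_iff]
  refine limNorm_eq ?_
  have hz : Tendsto (fun i => max 0 (‖f.1 i‖ - r)) (U : Filter I) (𝓝 0) := by
    have := (tendsto_const_nhds (x := (0 : ℝ))).max ((tendsto_limNorm f).sub_const r)
    rwa [← norm_def, ← hr, sub_self, max_self] at this
  exact squeeze_zero (fun i => norm_nonneg _) hsub hz

instance : CompleteSpace (Quot U A) := by
  refine NormedAddCommGroup.completeSpace_of_summable_imp_tendsto fun u hu => ?_
  choose f hf hfu using fun k => exists_lift (u k)
  have hs : ∀ i, Summable fun k => ‖(f k).1 i‖ := fun i =>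
    hu.of_nonneg_of_le (fun _ => norm_nonneg _) fun k => hf k i
  have hsum : ∀ i, ‖∑' k, (f k).1 i‖ ≤ ∑' k, ‖u k‖ := fun i =>
    tsum_of_norm_bounded hu.hasSum fun k => hf k i
  let S : BddFam U A := ⟨fun i => ∑' k, (f k).1 i, _, hsum⟩
  refine ⟨SeparationQuotient.mk S, ?_⟩
  rw [tendsto_iff_norm_sub_tendsto_zero]
  have htail : Tendsto (fun n => ∑' k, ‖u (k + n)‖) atTop (𝓝 0) :=
    tendsto_sum_nat_add fun k => ‖u k‖
  refine squeeze_zero (fun _ => norm_nonneg _) (fun n => ?_) htail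
  have e : ∑ k ∈ Finset.range n, u k - SeparationQuotient.mk S
      = SeparationQuotient.mk (∑ k ∈ Finset.range n, f k - S) := by
    rw [SeparationQuotient.mk_sub]
    congr 1
    rw [← show SeparationQuotient.mkRingHom (∑ k ∈ Finset.range n, f k)
      = SeparationQuotient.mk (∑ k ∈ Finset.range n, f k) from rfl, map_sum]
    exact Finset.sum_congr rfl fun k _ => (hfu k).symm
  rw [e, SeparationQuotient.norm_mk]
  refine limNorm_le fun i => ?_
  have hval : (∑ k ∈ Finset.range n, f k - S).1 i = -∑' k, (f (k + n)).1 i := by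
    have h1 : (∑ k ∈ Finset.range n, f k - S).1 i
        = ∑ k ∈ Finset.range n, (f k).1 i - ∑' k, (f k).1 i := by
      have : (∑ k ∈ Finset.range n, f k).1 i = ∑ k ∈ Finset.range n, (f k).1 i := by
        clear e
        induction n with
        | zero => rfl
        | succ n ih =>
          rw [Finset.sum_range_succ, Finset.sum_range_succ, ← ih]; rfl
      rw [← this]; rfl
    rw [h1, ← (hs i).of_norm.sum_add_tsum_nat_add n]
    abel
  rw [hval, norm_neg]
  exact tsum_of_norm_bounded ((summable_nat_add_iff n).mpr hu).hasSum fun k => hf (k + n) i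

instance : CStarAlgebra (Quot U A) where

end BddFam

open Classical in
theorem exists_ultraproduct : ∃ (B : Type) (_ : CStarAlgebra B) (π : (∀ i, A i) → B),
    IsCStarUltraproduct U A B π := by
  let mk : BddFam U A → BddFam.Quot U A := SeparationQuotient.mk
  let π : (∀ i, A i) → BddFam.Quot U A := fun f => if h : Bdd f then mk ⟨f, h⟩ else 0
  have hπ : ∀ f (h : Bdd f), π f = mk ⟨f, h⟩ := fun f h => dif_pos h
  refine ⟨BddFam.Quot U A, inferInstance, π, ?_⟩
  constructor
  · rw [hπ 1 ((bddSubalgebra A).one_mem)]; rfl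
  · intro f g hf hg
    rw [hπ f hf, hπ g hg, hπ _ ((bddSubalgebra A).add_mem hf hg)]; rfl
  · intro f g hf hg
    rw [hπ f hf, hπ g hg, hπ _ ((bddSubalgebra A).mul_mem hf hg)]; rfl
  · intro f hf
    rw [hπ f hf, hπ _ ((bddSubalgebra A).star_mem' hf)]; rfl
  · intro c f hf
    rw [hπ f hf, hπ _ ((bddSubalgebra A).smul_mem hf c)]; rfl
  · intro f hf
    rw [hπ f hf]
    exact BddFam.tendsto_limNorm (⟨f, hf⟩ : BddFam U A)
  · intro b
    obtain ⟨f, hf, hfb⟩ := BddFam.exists_lift b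
    exact ⟨f.1, hf, (hπ f.1 f.2).trans hfb⟩

end Ultraproduct

/-! ### Bounds on formulas and Łoś's theorem -/

/-- Evaluation of terms is bounded on the unit ball, uniformly over all C*-algebras. -/
theorem CTerm.exists_bound {n : ℕ} (t : CTerm n) : ∃ M : ℝ, ∀ (A : Type) [CStarAlgebra A]
    (a : Fin n → A), (∀ k, ‖a k‖ ≤ 1) → ‖t.eval a‖ ≤ M := by
  induction t with
  | var i => exact ⟨1, fun A _ a ha => by simpa [CTerm.eval] using ha i⟩
  | one =>
    refine ⟨1, fun A _ a ha => ?_⟩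
    rcases subsingleton_or_nontrivial A with h | h
    · simp [CTerm.eval, Subsingleton.elim (1 : A) 0]
    · simp [CTerm.eval]
  | add s t hs ht =>
    obtain ⟨M, hM⟩ := hs
    obtain ⟨N, hN⟩ := ht
    exact ⟨M + N, fun A _ a ha => by
      rw [CTerm.eval]
      exact (norm_add_le _ _).trans (add_le_add (hM A a ha) (hN A a ha))⟩
  | mul s t hs ht =>
    obtain ⟨M, hM⟩ := hs
    obtain ⟨N, hN⟩ := ht
    exact ⟨M * N, fun A _ a ha => by
      rw [CTerm.eval]
      exact (norm_mul_le _ _).trans (mul_le_mul (hM A a ha) (hN A a ha)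
        (norm_nonneg _) ((norm_nonneg _).trans (hM A a ha)))⟩
  | star t ht =>
    obtain ⟨M, hM⟩ := ht
    exact ⟨M, fun A _ a ha => by simpa [CTerm.eval] using hM A a ha⟩
  | smul c t ht =>
    obtain ⟨M, hM⟩ := ht
    refine ⟨‖c‖ * M, fun A _ a ha => ?_⟩
    rw [CTerm.eval, norm_smul]
    exact mul_le_mul_of_nonneg_left (hM A a ha) (norm_nonneg _)

instance (A : Type) [CStarAlgebra A] : Nonempty {x : A // ‖x‖ ≤ 1} := ⟨⟨0, by simp⟩⟩

theorem norm_snoc_le {A : Type} [CStarAlgebra A] {n : ℕ} {a : Fin n → A} {b : A}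
    (ha : ∀ k, ‖a k‖ ≤ 1) (hb : ‖b‖ ≤ 1) (k : Fin (n + 1)) :
    ‖(Fin.snoc a b : Fin (n + 1) → A) k‖ ≤ 1 := by
  induction k using Fin.lastCases with
  | last => simpa using hb
  | cast k => simpa using ha k

theorem norm_append_le {A : Type} [CStarAlgebra A] {m n : ℕ} {a : Fin m → A} {b : Fin n → A}
    (ha : ∀ k, ‖a k‖ ≤ 1) (hb : ∀ k, ‖b k‖ ≤ 1) (k : Fin (m + n)) :
    ‖Fin.append a b k‖ ≤ 1 := by
  induction k using Fin.addCases with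
  | left k => simpa using ha k
  | right k => simpa using hb k

/-- Formulas are bounded on the unit ball, uniformly over all C*-algebras. In particular the
suprema and infima in `Formula.interp` are genuine. -/
theorem Formula.exists_bound {n : ℕ} (phi : Formula n) : ∃ M : ℝ, ∀ (A : Type) [CStarAlgebra A]
    (a : Fin n → A), (∀ k, ‖a k‖ ≤ 1) → |phi.interp A a| ≤ M := by
  induction phi with
  | atom t =>
    obtain ⟨M, hM⟩ := t.exists_bound
    exact ⟨M, fun A _ a ha => by simpa [Formula.interp] using hM A a ha⟩
  | @comb n k u hu phis ih =>
    choose M hM using ih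
    obtain ⟨C, hC⟩ := (isCompact_univ_pi fun j => isCompact_Icc (a := -M j) (b := M j)
      ).exists_bound_of_continuousOn hu.continuousOn
    exact ⟨C, fun A _ a ha => hC _ fun j _ => abs_le.mp (hM j A a ha)⟩
  | sup phi ih =>
    obtain ⟨M, hM⟩ := ih
    refine ⟨M, fun A _ a ha => ?_⟩
    have h := fun b : {x : A // ‖x‖ ≤ 1} => abs_le.mp (hM A _ (norm_snoc_le ha b.2))
    rw [Formula.interp, abs_le]
    refine ⟨?_, ciSup_le fun b => (h b).2⟩
    exact (h ⟨0, by simp⟩).1.trans (le_ciSup (f := fun b : {x : A // ‖x‖ ≤ 1} =>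
      phi.interp A (Fin.snoc a b.1)) ⟨M, by rintro _ ⟨b, rfl⟩; exact (h b).2⟩ ⟨0, by simp⟩)
  | inf phi ih =>
    obtain ⟨M, hM⟩ := ih
    refine ⟨M, fun A _ a ha => ?_⟩
    have h := fun b : {x : A // ‖x‖ ≤ 1} => abs_le.mp (hM A _ (norm_snoc_le ha b.2))
    rw [Formula.interp, abs_le]
    refine ⟨le_ciInf fun b => (h b).1, ?_⟩
    exact (ciInf_le (f := fun b : {x : A // ‖x‖ ≤ 1} =>
      phi.interp A (Fin.snoc a b.1)) ⟨-M, by rintro _ ⟨b, rfl⟩; exact (h b).1⟩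
      ⟨0, by simp⟩).trans (h ⟨0, by simp⟩).2

theorem Formula.interp_le_sup {n : ℕ} (phi : Formula (n + 1)) {A : Type} [CStarAlgebra A]
    {a : Fin n → A} (ha : ∀ k, ‖a k‖ ≤ 1) {b : A} (hb : ‖b‖ ≤ 1) :
    phi.interp A (Fin.snoc a b) ≤ phi.sup.interp A a := by
  obtain ⟨M, hM⟩ := phi.exists_bound
  exact le_ciSup (f := fun b : {x : A // ‖x‖ ≤ 1} => phi.interp A (Fin.snoc a b.1))
    ⟨M, by rintro _ ⟨b, rfl⟩; exact (abs_le.mp (hM A _ (norm_snoc_le ha b.2))).2⟩ ⟨b, hb⟩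

theorem Formula.inf_le_interp {n : ℕ} (phi : Formula (n + 1)) {A : Type} [CStarAlgebra A]
    {a : Fin n → A} (ha : ∀ k, ‖a k‖ ≤ 1) {b : A} (hb : ‖b‖ ≤ 1) :
    phi.inf.interp A a ≤ phi.interp A (Fin.snoc a b) := by
  obtain ⟨M, hM⟩ := phi.exists_bound
  exact ciInf_le (f := fun b : {x : A // ‖x‖ ≤ 1} => phi.interp A (Fin.snoc a b.1))
    ⟨-M, by rintro _ ⟨b, rfl⟩; exact (abs_le.mp (hM A _ (norm_snoc_le ha b.2))).1⟩ ⟨b, hb⟩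

theorem snoc_family {I : Type} {A : I → Type} {n : ℕ} (a : Fin n → ∀ i, A i) (g : ∀ i, A i) (i : I) :
    (fun k => (Fin.snoc a g : Fin (n + 1) → ∀ i, A i) k i)
      = (Fin.snoc (fun k => a k i) (g i) : Fin (n + 1) → A i) := by
  funext k
  induction k using Fin.lastCases with
  | last => simp
  | cast k => simp

theorem snoc_image {I : Type} {A : I → Type} {B : Type} {π : (∀ i, A i) → B} {n : ℕ} (a : Fin n → ∀ i, A i) (g : ∀ i, A i) :
    (fun k => π ((Fin.snoc a g : Fin (n + 1) → ∀ i, A i) k))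
      = (Fin.snoc (fun k => π (a k)) (π g) : Fin (n + 1) → B) := by
  funext k
  induction k using Fin.lastCases with
  | last => simp
  | cast k => simp

section Los

variable {I : Type} {U : Ultrafilter I} {A : I → Type} [∀ i, CStarAlgebra (A i)]
  {B : Type} [CStarAlgebra B] {π : (∀ i, A i) → B}

theorem bdd_eval {n : ℕ} (t : CTerm n) {a : Fin n → ∀ i, A i} (ha : ∀ k i, ‖a k i‖ ≤ 1) :
    Bdd fun i => t.eval fun k => a k i := by
  obtain ⟨M, hM⟩ := t.exists_bound
  exact ⟨M, fun i => hM (A i) _ fun k => ha k i⟩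

theorem IsCStarUltraproduct.eval (hπ : IsCStarUltraproduct U A B π) {n : ℕ} (t : CTerm n)
    {a : Fin n → ∀ i, A i} (ha : ∀ k i, ‖a k i‖ ≤ 1) :
    t.eval (fun k => π (a k)) = π fun i => t.eval fun k => a k i := by
  induction t with
  | var k => simp only [CTerm.eval]
  | one => simp only [CTerm.eval]; exact hπ.map_one.symm
  | add s t hs ht =>
    simp only [CTerm.eval, hs, ht]
    exact (hπ.map_add _ _ (bdd_eval s ha) (bdd_eval t ha)).symm
  | mul s t hs ht =>
    simp only [CTerm.eval, hs, ht]
    exact (hπ.map_mul _ _ (bdd_eval s ha) (bdd_eval t ha)).symm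
  | star t ht =>
    simp only [CTerm.eval, ht]
    exact (hπ.map_star _ (bdd_eval t ha)).symm
  | smul c t ht =>
    simp only [CTerm.eval, ht]
    exact (hπ.map_smul c _ (bdd_eval t ha)).symm

theorem IsCStarUltraproduct.norm_le_one (hπ : IsCStarUltraproduct U A B π) {f : ∀ i, A i}
    (hf : ∀ i, ‖f i‖ ≤ 1) : ‖π f‖ ≤ 1 :=
  le_of_tendsto (hπ.norm_eq f ⟨1, hf⟩) (Eventually.of_forall hf)

theorem IsCStarUltraproduct.exists_lift (hπ : IsCStarUltraproduct U A B π) {b : B}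
    (hb : ‖b‖ ≤ 1) : ∃ f, (∀ i, ‖f i‖ ≤ 1) ∧ π f = b := by
  obtain ⟨f, hf, rfl⟩ := hπ.surj b
  exact ⟨f, fun i => (hf i).trans hb, rfl⟩

theorem snoc_family_le {n : ℕ} {a : Fin n → ∀ i, A i} {g : ∀ i, A i}
    (ha : ∀ k i, ‖a k i‖ ≤ 1) (hg : ∀ i, ‖g i‖ ≤ 1) (k : Fin (n + 1)) (i : I) :
    ‖(Fin.snoc a g : Fin (n + 1) → ∀ i, A i) k i‖ ≤ 1 := by
  induction k using Fin.lastCases with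
  | last => simpa using hg i
  | cast k => simpa using ha k i

/-- Łoś's theorem for ultraproducts of C*-algebras. -/
theorem IsCStarUltraproduct.tendsto_interp (hπ : IsCStarUltraproduct U A B π) {n : ℕ}
    (phi : Formula n) {a : Fin n → ∀ i, A i} (ha : ∀ k i, ‖a k i‖ ≤ 1) :
    Tendsto (fun i => phi.interp (A i) fun k => a k i) (U : Filter I)
      (𝓝 (phi.interp B fun k => π (a k))) := by
  induction phi with
  | atom t =>
    simp only [Formula.interp]
    rw [hπ.eval t ha]
    exact hπ.norm_eq _ (bdd_eval t ha)
  | comb u hu phis ih =>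
    exact (hu.tendsto _).comp (tendsto_pi_nhds.mpr fun j => ih j ha)
  | @sup n phi ih =>
    have hπa : ∀ k, ‖π (a k)‖ ≤ 1 := fun k => hπ.norm_le_one (ha k)
    rw [tendsto_order]
    constructor
    · intro c hc
      obtain ⟨b, hb⟩ := exists_lt_of_lt_ciSup hc
      obtain ⟨g, hg, hgb⟩ := hπ.exists_lift b.2
      have h := ih (snoc_family_le ha hg)
      simp only [snoc_family, snoc_image, hgb] at h
      filter_upwards [h.eventually_const_lt hb] with i hi
      exact hi.trans_le (phi.interp_le_sup (fun k => ha k i) (hg i))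
    · intro c hc
      by_contra hcon
      rw [← Ultrafilter.eventually_not] at hcon
      obtain ⟨d, hd1, hd2⟩ := exists_between hc
      -- a family of near-maximizers gives an element of the ball of `B` with too large a value
      have hex : ∀ i, ∃ x : A i, ‖x‖ ≤ 1 ∧ (¬ phi.sup.interp (A i) (fun k => a k i) < c →
          d < phi.interp (A i) (Fin.snoc (fun k => a k i) x)) := by
        intro i
        by_cases h : phi.sup.interp (A i) (fun k => a k i) < c
        · exact ⟨0, by simp, fun h' => absurd h h'⟩
        · obtain ⟨x, hx⟩ := exists_lt_of_lt_ciSup (hd2.trans_le (not_lt.mp h))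
          exact ⟨x.1, x.2, fun _ => hx⟩
      choose g hg hgd using hex
      have h := ih (snoc_family_le ha hg)
      simp only [snoc_family, snoc_image] at h
      have h2 : d ≤ phi.interp B (Fin.snoc (fun k => π (a k)) (π g)) :=
        ge_of_tendsto h (hcon.mono fun i hi => (hgd i hi).le)
      exact absurd (h2.trans (phi.interp_le_sup hπa (hπ.norm_le_one hg))) (not_le.mpr hd1)
  | @inf n phi ih =>
    have hπa : ∀ k, ‖π (a k)‖ ≤ 1 := fun k => hπ.norm_le_one (ha k)
    rw [tendsto_order]
    constructor
    · intro c hc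
      by_contra hcon
      rw [← Ultrafilter.eventually_not] at hcon
      obtain ⟨d, hd1, hd2⟩ := exists_between hc
      have hex : ∀ i, ∃ x : A i, ‖x‖ ≤ 1 ∧ (¬ c < phi.inf.interp (A i) (fun k => a k i) →
          phi.interp (A i) (Fin.snoc (fun k => a k i) x) < d) := by
        intro i
        by_cases h : c < phi.inf.interp (A i) (fun k => a k i)
        · exact ⟨0, by simp, fun h' => absurd h h'⟩
        · obtain ⟨x, hx⟩ := exists_lt_of_ciInf_lt ((not_lt.mp h).trans_lt hd1)
          exact ⟨x.1, x.2, fun _ => hx⟩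
      choose g hg hgd using hex
      have h := ih (snoc_family_le ha hg)
      simp only [snoc_family, snoc_image] at h
      have h2 : phi.interp B (Fin.snoc (fun k => π (a k)) (π g)) ≤ d :=
        le_of_tendsto h (hcon.mono fun i hi => (hgd i hi).le)
      exact absurd ((phi.inf_le_interp hπa (hπ.norm_le_one hg)).trans h2) (not_le.mpr hd2)
    · intro c hc
      obtain ⟨b, hb⟩ := exists_lt_of_ciInf_lt hc
      obtain ⟨g, hg, hgb⟩ := hπ.exists_lift b.2
      have h := ih (snoc_family_le ha hg)
      simp only [snoc_family, snoc_image, hgb] at h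
      filter_upwards [h.eventually_lt_const hb] with i hi
      exact (phi.inf_le_interp (fun k => ha k i) (hg i)).trans_lt hi

theorem IsCStarUltraproduct.models (hπ : IsCStarUltraproduct U A B π) {T : CStarTheory}
    (hA : ∀ i, Models (A i) T) : Models B T := by
  intro σ hσ
  have h := hπ.tendsto_interp σ (a := finZeroElim (α := fun _ => ∀ i, A i)) (fun k => k.elim0)
  have e1 : ∀ i, σ.interp (A i) (fun k : Fin 0 => (finZeroElim (α := fun _ => ∀ i, A i) k) i) = 0 := fun i => by
    rw [← hA i σ hσ]; congr 1; exact Subsingleton.elim _ _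
  simp only [e1] at h
  rw [← tendsto_nhds_unique h tendsto_const_nhds]
  congr 1
  exact Subsingleton.elim _ _

end Los

/-! ### The maximal tensor norm under *-homomorphisms -/

/-- The function `P^max_n` with its two `n`-tuples of arguments concatenated. -/
def pmax {n : ℕ} (A : Type) [CStarAlgebra A] (c : Fin (n + n) → A) : ℝ :=
  maxNorm A A (∑ k : Fin n, c (Fin.castAdd n k) ⊗ₜ[ℂ] c (Fin.natAdd n k))

theorem pmax_append {n : ℕ} {A : Type} [CStarAlgebra A] (a b : Fin n → A) :
    pmax A (Fin.append a b) = maxNorm A A (∑ k, a k ⊗ₜ[ℂ] b k) := by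
  simp only [pmax, Fin.append_left, Fin.append_right]

theorem CommutingRepPair.hom_sum {A : Type} [CStarAlgebra A] (p : CommutingRepPair A A) {n : ℕ}
    (a b : Fin n → A) :
    p.hom (∑ k, a k ⊗ₜ[ℂ] b k) = ∑ k, p.fst (a k) * p.snd (b k) := by
  rw [map_sum]
  exact Finset.sum_congr rfl fun k _ => Algebra.TensorProduct.lift_tmul _ _ _ _ _

theorem CommutingRepPair.norm_hom_le {n : ℕ} {A : Type} [CStarAlgebra A]
    (p : CommutingRepPair A A) {a b : Fin n → A} (ha : ∀ k, ‖a k‖ ≤ 1) (hb : ∀ k, ‖b k‖ ≤ 1) :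
    ‖p.hom (∑ k, a k ⊗ₜ[ℂ] b k)‖ ≤ n := by
  rw [p.hom_sum]
  refine (norm_sum_le _ _).trans ?_
  have : ∀ k ∈ Finset.univ, ‖p.fst (a k) * p.snd (b k)‖ ≤ 1 := fun k _ => by
    have h1 : ‖p.fst (a k)‖ ≤ 1 := (NonUnitalStarAlgHom.norm_apply_le p.fst (a k)).trans (ha k)
    have h2 : ‖p.snd (b k)‖ ≤ 1 := (NonUnitalStarAlgHom.norm_apply_le p.snd (b k)).trans (hb k)
    exact (norm_mul_le _ _).trans (mul_le_one₀ h1 (norm_nonneg _) h2)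
  simpa using Finset.sum_le_sum this

theorem pmax_nonneg {n : ℕ} {A : Type} [CStarAlgebra A] (c : Fin (n + n) → A) :
    0 ≤ pmax A c :=
  Real.sSup_nonneg (by rintro _ ⟨p, rfl⟩; exact norm_nonneg _)

theorem pmax_le {n : ℕ} {A : Type} [CStarAlgebra A] {c : Fin (n + n) → A}
    (hc : ∀ k, ‖c k‖ ≤ 1) : pmax A c ≤ n :=
  Real.sSup_le (by rintro _ ⟨p, rfl⟩; exact p.norm_hom_le (fun k => hc _) fun k => hc _)
    n.cast_nonneg

/-- `P^max` decreases along *-homomorphisms, since commuting pairs of representations pull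
back. -/
theorem pmax_map_le {n : ℕ} {A B : Type} [CStarAlgebra A] [CStarAlgebra B] (φ : A →⋆ₐ[ℂ] B)
    {c : Fin (n + n) → A} (hc : ∀ k, ‖c k‖ ≤ 1) : pmax B (fun k => φ (c k)) ≤ pmax A c := by
  refine Real.sSup_le ?_ (pmax_nonneg c)
  rintro _ ⟨p, rfl⟩
  let q : CommutingRepPair A A :=
    { carrier := p.carrier
      fst := p.fst.comp φ
      snd := p.snd.comp φ
      commutes := fun a b => p.commutes _ _ }
  refine le_csSup ⟨n, ?_⟩ ⟨q, ?_⟩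
  · rintro _ ⟨p, rfl⟩
    exact p.norm_hom_le (fun k => hc _) fun k => hc _
  · rw [CommutingRepPair.hom_sum, CommutingRepPair.hom_sum]
    rfl

theorem MaxUltraContinuous.tendsto_pmax {T : CStarTheory} (hT : MaxUltraContinuous T)
    {I : Type} {U : Ultrafilter I} {A : I → Type} [∀ i, CStarAlgebra (A i)]
    (hA : ∀ i, Models (A i) T) {B : Type} [CStarAlgebra B] {π : (∀ i, A i) → B}
    (hπ : IsCStarUltraproduct U A B π) {n : ℕ} {c : Fin (n + n) → ∀ i, A i}
    (hc : ∀ k i, ‖c k i‖ ≤ 1) :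
    Tendsto (fun i => pmax (A i) fun k => c k i) (U : Filter I) (𝓝 (pmax B fun k => π (c k))) :=
  hT I U A hA B π hπ n (fun k => c (Fin.castAdd n k)) (fun k => c (Fin.natAdd n k))
    (fun _ => hc _) (fun _ => hc _)

/-! ### Diagrams and quantifier-free upper bounds -/

/-- Substitution of variables in a term. -/
def CTerm.rename : ∀ {m n : ℕ}, (Fin m → Fin n) → CTerm m → CTerm n
  | _, _, r, CTerm.var i => CTerm.var (r i)
  | _, _, _, CTerm.one => CTerm.one
  | _, _, r, CTerm.add s t => CTerm.add (s.rename r) (t.rename r)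
  | _, _, r, CTerm.mul s t => CTerm.mul (s.rename r) (t.rename r)
  | _, _, r, CTerm.star t => CTerm.star (t.rename r)
  | _, _, r, CTerm.smul c t => CTerm.smul c (t.rename r)

theorem CTerm.eval_rename {A : Type} [CStarAlgebra A] {m n : ℕ} (r : Fin m → Fin n)
    (t : CTerm m) (a : Fin n → A) : (t.rename r).eval a = t.eval fun j => a (r j) := by
  induction t with
  | var i => simp only [CTerm.rename, CTerm.eval]
  | one => simp only [CTerm.rename, CTerm.eval]
  | add s t hs ht => simp only [CTerm.rename, CTerm.eval, hs, ht]
  | mul s t hs ht => simp only [CTerm.rename, CTerm.eval, hs, ht]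
  | star t ht => simp only [CTerm.rename, CTerm.eval, ht]
  | smul c t ht => simp only [CTerm.rename, CTerm.eval, ht]

theorem Formula.IsQF.exists_rename {m : ℕ} {phi : Formula m} (h : phi.IsQF) {n : ℕ}
    (r : Fin m → Fin n) : ∃ psi : Formula n, psi.IsQF ∧ ∀ (A : Type) [CStarAlgebra A]
      (a : Fin n → A), psi.interp A a = phi.interp A fun j => a (r j) := by
  induction h with
  | atom t =>
    exact ⟨.atom (t.rename r), .atom _, fun A _ a => by
      simp only [Formula.interp, CTerm.eval_rename]⟩
  | comb u hu phis _ ih =>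
    choose psis hqf hpsis using ih
    exact ⟨.comb u hu psis, .comb u hu psis hqf, fun A _ a => by
      simp only [Formula.interp, hpsis]⟩

/-- The named elements of the unit ball of `A` used to describe its diagram: a distinguished
tuple `c` and, for every `x : A`, the rescaled element `x / (‖x‖ + 1)`. -/
def diagVal {ι A : Type} [CStarAlgebra A] (c : ι → A) : ι ⊕ A → A :=
  Sum.elim c fun x => (((‖x‖ + 1)⁻¹ : ℝ) : ℂ) • x

theorem norm_diagVal_le {ι A : Type} [CStarAlgebra A] {c : ι → A} (hc : ∀ k, ‖c k‖ ≤ 1)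
    (w : ι ⊕ A) : ‖diagVal c w‖ ≤ 1 := by
  rcases w with k | x
  · exact hc k
  · have h : 0 < ‖x‖ + 1 := by positivity
    rw [diagVal, Sum.elim_inr, norm_smul, Complex.norm_real,
      Real.norm_of_nonneg (by positivity), inv_mul_le_iff₀ h]
    linarith

/-- A family in `B` satisfying all *-polynomial relations which hold among the named elements
of `A` comes from a *-homomorphism `A → B`. -/
theorem exists_starAlgHom_of_diagram {ι A B : Type} [CStarAlgebra A] [CStarAlgebra B] (c : ι → A)
    (q : ι ⊕ A → B)
    (h : ∀ (k : ℕ) (t : CTerm k) (w : Fin k → ι ⊕ A),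
      t.eval (fun j => diagVal c (w j)) = 0 → t.eval (fun j => q (w j)) = 0) :
    ∃ φ : A →⋆ₐ[ℂ] B, ∀ k, φ (c k) = q (Sum.inl k) := by
  let s : A → ℂ := fun x => ((‖x‖ + 1 : ℝ) : ℂ)
  have hs : ∀ x, s x • diagVal c (Sum.inr x) = x := by
    intro x
    have h0 : ‖x‖ + 1 ≠ 0 := by positivity
    rw [diagVal, Sum.elim_inr, smul_smul, ← Complex.ofReal_mul, mul_inv_cancel₀ h0]
    simp
  let f : A → B := fun x => s x • q (Sum.inr x)
  have hsmul : ∀ (z : ℂ) x, f (z • x) = z • f x := by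
    intro z x
    have := h 2 (.add (.smul (s (z • x)) (.var 0)) (.smul (-1) (.smul z (.smul (s x) (.var 1)))))
      ![Sum.inr (z • x), Sum.inr x] (by simp [CTerm.eval, hs])
    simpa [CTerm.eval, ← sub_eq_add_neg, sub_eq_zero] using this
  have hadd : ∀ x y, f (x + y) = f x + f y := by
    intro x y
    have := h 3 (.add (.smul (s (x + y)) (.var 0))
      (.smul (-1) (.add (.smul (s x) (.var 1)) (.smul (s y) (.var 2)))))
      ![Sum.inr (x + y), Sum.inr x, Sum.inr y]
      (by simp only [CTerm.eval]
          simp only [Matrix.cons_val, hs]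
          simp only [neg_smul, one_smul, add_neg_cancel])
    simp only [CTerm.eval, neg_smul, one_smul, ← sub_eq_add_neg, sub_eq_zero] at this
    simpa using this
  have hmul : ∀ x y, f (x * y) = f x * f y := by
    intro x y
    have := h 3 (.add (.smul (s (x * y)) (.var 0))
      (.smul (-1) (.mul (.smul (s x) (.var 1)) (.smul (s y) (.var 2)))))
      ![Sum.inr (x * y), Sum.inr x, Sum.inr y]
      (by simp only [CTerm.eval]
          simp only [Matrix.cons_val, hs]
          simp)
    simp only [CTerm.eval, neg_smul, one_smul, ← sub_eq_add_neg, sub_eq_zero] at this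
    exact this
  have hstar : ∀ x, f (star x) = star (f x) := by
    intro x
    have := h 2 (.add (.smul (s (star x)) (.var 0))
      (.smul (-1) (.star (.smul (s x) (.var 1))))) ![Sum.inr (star x), Sum.inr x]
      (by simp only [CTerm.eval]
          simp only [Matrix.cons_val, hs]
          simp)
    simp only [CTerm.eval, neg_smul, one_smul, ← sub_eq_add_neg, sub_eq_zero] at this
    exact this
  have hone : f 1 = 1 := by
    have := h 1 (.add (.smul (s 1) (.var 0)) (.smul (-1) .one)) ![Sum.inr 1]
      (by simp [CTerm.eval, hs])
    simp only [CTerm.eval, neg_smul, one_smul, ← sub_eq_add_neg, sub_eq_zero] at this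
    exact this
  have hzero : f 0 = 0 := by simpa using hsmul 0 0
  refine ⟨{ toFun := f
            map_one' := hone
            map_mul' := hmul
            map_zero' := hzero
            map_add' := hadd
            commutes' := fun z => by
              rw [Algebra.algebraMap_eq_smul_one, Algebra.algebraMap_eq_smul_one, hsmul, hone]
            map_star' := hstar }, fun k => ?_⟩
  have := h 2 (.add (.smul (s (c k)) (.var 0)) (.smul (-1) (.var 1)))
    ![Sum.inr (c k), Sum.inl k]
    (by simp only [CTerm.eval]
        simp only [Matrix.cons_val, hs]
        simp [diagVal])
  simp only [CTerm.eval, neg_smul, one_smul, ← sub_eq_add_neg, sub_eq_zero] at this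
  exact this

/-- A *-polynomial relation among the named elements `diagVal c` of `A`. -/
structure DiagRel {ι A : Type} [CStarAlgebra A] (c : ι → A) where
  arity : ℕ
  term : CTerm arity
  vars : Fin arity → ι ⊕ A
  eval_eq : term.eval (fun j => diagVal c (vars j)) = 0

/-- Finitely many approximate relations from the diagram of `(A, c)` already force
`P^max ≤ P^max_A(c) + ε`: otherwise an ultraproduct of counterexamples would receive a
*-homomorphism from `A` increasing `P^max`. -/
theorem exists_finite_diagram {T : CStarTheory} (hT : MaxUltraContinuous T) {A : Type}
    [CStarAlgebra A] {n : ℕ} {c : Fin (n + n) → A} (hc : ∀ k, ‖c k‖ ≤ 1) {ε : ℝ} (hε : 0 < ε) :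
    ∃ (F : Finset (DiagRel c)) (N : ℕ), ∀ (A' : Type) [CStarAlgebra A'], Models A' T →
      ∀ y : Fin (n + n) ⊕ A → A', (∀ w, ‖y w‖ ≤ 1) →
        (∀ r ∈ F, ‖r.term.eval fun j => y (r.vars j)‖ < 1 / ((N : ℝ) + 1)) →
        pmax A' (fun k => y (Sum.inl k)) ≤ pmax A c + ε := by
  classical
  by_contra hcon
  push Not at hcon
  have hcon' : ∀ i : Finset (DiagRel c) × ℕ, ∃ (A' : Type) (_ : CStarAlgebra A'),
      Models A' T ∧ ∃ y : Fin (n + n) ⊕ A → A', (∀ w, ‖y w‖ ≤ 1) ∧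
        (∀ r ∈ i.1, ‖r.term.eval fun j => y (r.vars j)‖ < 1 / ((i.2 : ℝ) + 1)) ∧
        pmax A c + ε < pmax A' (fun k => y (Sum.inl k)) := fun i => hcon i.1 i.2
  choose C inst hC y hy hrel hlt using hcon'
  let U : Ultrafilter (Finset (DiagRel c) × ℕ) := Ultrafilter.of atTop
  have hU : ↑U ≤ (atTop : Filter (Finset (DiagRel c) × ℕ)) := Ultrafilter.of_le _
  obtain ⟨B, _, π, hπ⟩ := exists_ultraproduct U C
  let q : Fin (n + n) ⊕ A → B := fun w => π fun i => y i w
  have hN : Tendsto (fun i : Finset (DiagRel c) × ℕ => 1 / ((i.2 : ℝ) + 1)) U (𝓝 0) := by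
    refine (tendsto_one_div_add_atTop_nhds_zero_nat (𝕜 := ℝ)).comp (Tendsto.mono_left ?_ hU)
    rw [← prod_atTop_atTop_eq]
    exact tendsto_snd
  have hq : ∀ (k : ℕ) (t : CTerm k) (w : Fin k → Fin (n + n) ⊕ A),
      t.eval (fun j => diagVal c (w j)) = 0 → t.eval (fun j => q (w j)) = 0 := by
    intro k t w ht
    have hb : ∀ (j : Fin k) i, ‖y i (w j)‖ ≤ 1 := fun j i => hy i (w j)
    rw [hπ.eval t (a := fun j i => y i (w j)) hb, ← norm_eq_zero]
    refine tendsto_nhds_unique (hπ.norm_eq _ (bdd_eval t hb)) ?_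
    refine squeeze_zero' (Eventually.of_forall fun _ => norm_nonneg _) ?_ hN
    filter_upwards [hU (mem_atTop (({⟨k, t, w, ht⟩} : Finset (DiagRel c)), 0))] with i hi
    exact (hrel i ⟨k, t, w, ht⟩ (hi.1 (Finset.mem_singleton_self _))).le
  obtain ⟨φ, hφ⟩ := exists_starAlgHom_of_diagram c q hq
  have h1 : pmax B (fun k => q (Sum.inl k)) ≤ pmax A c := by
    simpa only [hφ] using pmax_map_le φ hc
  have h2 : pmax A c + ε ≤ pmax B (fun k => q (Sum.inl k)) :=
    ge_of_tendsto (hT.tendsto_pmax hC hπ (c := fun k i => y i (Sum.inl k)) fun k i => hy i _)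
      (Eventually.of_forall fun i => (hlt i).le)
  linarith

/-- A quantifier-free formula `θ(x, y)` with `P^max(x) ≤ inf_y θ(x, y)` in all models of `T`. -/
structure QFUpperBound (T : CStarTheory) (n : ℕ) where
  m : ℕ
  theta : Formula (n + n + m)
  isQF : theta.IsQF
  le : ∀ (A : Type) [CStarAlgebra A], Models A T → ∀ (c : Fin (n + n) → A) (y : Fin m → A),
    (∀ k, ‖c k‖ ≤ 1) → (∀ k, ‖y k‖ ≤ 1) → pmax A c ≤ theta.interp A (Fin.append c y)

theorem exists_fin_param {α : Type} [Nonempty α] {S : Set α} (hS : S.Finite) :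
    ∃ (m : ℕ) (e : Fin m → α) (g : α → Fin m), ∀ x ∈ S, e (g x) = x := by
  classical
  obtain ⟨z⟩ := ‹Nonempty α›
  let S' : Finset α := insert z hS.toFinset
  let E := S'.equivFin
  have : Nonempty S' := ⟨⟨z, Finset.mem_insert_self _ _⟩⟩
  refine ⟨S'.card, fun j => (E.symm j).1, fun x => if h : x ∈ S' then E ⟨x, h⟩ else
    E (Classical.arbitrary _), fun x hx => ?_⟩
  have h : x ∈ S' := Finset.mem_insert_of_mem (hS.mem_toFinset.mpr hx)
  simp [h]

/-- In every `(A, c)`, some quantifier-free upper bound is optimal up to `ε`. The formula is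
`P^max_A(c) + ε + n (N + 1) ∑ ‖relations‖`, summed over a finite part of the diagram. -/
theorem exists_qfUpperBound {T : CStarTheory} (hT : MaxUltraContinuous T) {A : Type}
    [CStarAlgebra A] {n : ℕ} {c : Fin (n + n) → A} (hc : ∀ k, ‖c k‖ ≤ 1) {ε : ℝ} (hε : 0 < ε) :
    ∃ (θ : QFUpperBound T n) (y : Fin θ.m → A), (∀ k, ‖y k‖ ≤ 1) ∧
      θ.theta.interp A (Fin.append c y) ≤ pmax A c + ε := by
  classical
  obtain ⟨F, N, hF⟩ := exists_finite_diagram hT hc hε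
  have hfin : {x : A | ∃ r ∈ F, ∃ j, r.vars j = Sum.inr x}.Finite := by
    have : {x : A | ∃ r ∈ F, ∃ j, r.vars j = Sum.inr x}
        ⊆ ⋃ r ∈ F, Sum.inr ⁻¹' Set.range r.vars := by
      rintro x ⟨r, hr, j, hj⟩
      simp only [Set.mem_iUnion]
      exact ⟨r, hr, j, hj⟩
    refine Set.Finite.subset (F.finite_toSet.biUnion fun r _ => ?_) this
    exact (Set.finite_range r.vars).preimage Sum.inr_injective.injOn
  obtain ⟨m, e, g, heg⟩ := exists_fin_param hfin
  let ρ : Fin (n + n) ⊕ A → Fin (n + n + m) :=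
    Sum.elim (Fin.castAdd m) fun x => Fin.natAdd (n + n) (g x)
  let R : Fin F.card → DiagRel c := fun j => (F.equivFin.symm j).1
  have hR : ∀ j, R j ∈ F := fun j => (F.equivFin.symm j).2
  let θ : Formula (n + n + m) := .comb
    (fun s => pmax A c + ε + n * ((N : ℝ) + 1) * ∑ j, s j)
    (by fun_prop)
    (fun j => .atom ((R j).term.rename fun l => ρ ((R j).vars l)))
  have hθ : ∀ (A' : Type) [CStarAlgebra A'] (a : Fin (n + n + m) → A'), θ.interp A' a
      = pmax A c + ε + n * ((N : ℝ) + 1) *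
        ∑ j, ‖(R j).term.eval fun l => a (ρ ((R j).vars l))‖ := by
    intro A' _ a
    simp only [θ, Formula.interp, CTerm.eval_rename]
  have hpos : (0 : ℝ) < (N : ℝ) + 1 := by positivity
  refine ⟨⟨m, θ, .comb _ _ _ fun j => .atom _, ?_⟩, fun j => diagVal c (Sum.inr (e j)),
    fun k => norm_diagVal_le hc _, ?_⟩
  · intro A' _ hA' c' y hc' hy
    have hball := norm_append_le hc' hy
    rw [hθ]
    by_cases hsmall : ∀ r ∈ F,
        ‖r.term.eval fun l => Fin.append c' y (ρ (r.vars l))‖ < 1 / ((N : ℝ) + 1)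
    · have h1 := hF A' hA' (fun w => Fin.append c' y (ρ w)) (fun w => hball _) hsmall
      have h2 : (fun k => Fin.append c' y (ρ (Sum.inl k))) = c' := by
        funext k; simp [ρ]
      rw [h2] at h1
      refine h1.trans (le_add_of_nonneg_right ?_)
      exact mul_nonneg (by positivity) (Finset.sum_nonneg fun _ _ => norm_nonneg _)
    · push Not at hsmall
      obtain ⟨r, hr, hlarge⟩ := hsmall
      have hj : R (F.equivFin ⟨r, hr⟩) = r := by simp [R]
      have h1 : 1 / ((N : ℝ) + 1)
          ≤ ∑ j, ‖(R j).term.eval fun l => Fin.append c' y (ρ ((R j).vars l))‖ := by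
        refine hlarge.trans ?_
        have := Finset.single_le_sum
          (f := fun j => ‖(R j).term.eval fun l => Fin.append c' y (ρ ((R j).vars l))‖)
          (fun _ _ => norm_nonneg _) (Finset.mem_univ (F.equivFin ⟨r, hr⟩))
        rwa [hj] at this
      have h2 : (n : ℝ) ≤ n * ((N : ℝ) + 1) *
          ∑ j, ‖(R j).term.eval fun l => Fin.append c' y (ρ ((R j).vars l))‖ := by
        calc (n : ℝ) = n * ((N : ℝ) + 1) * (1 / ((N : ℝ) + 1)) := by field_simp
          _ ≤ _ := by gcongr
      have h3 := pmax_nonneg c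
      have h4 := pmax_le hc'
      linarith
  · change θ.interp A _ ≤ _
    rw [hθ]
    have hz : ∀ j, (R j).term.eval (fun l => Fin.append c
        (fun j => diagVal c (Sum.inr (e j))) (ρ ((R j).vars l))) = 0 := by
      intro j
      rw [← (R j).eval_eq]
      congr 1
      funext l
      rcases hl : (R j).vars l with k | x
      · simp [ρ, diagVal]
      · simp [ρ, heg x ⟨R j, hR j, l, hl⟩]
    simp [hz]

/-- By compactness, finitely many quantifier-free upper bounds suffice in all models. -/
theorem exists_finite_upperBounds {T : CStarTheory} (hT : MaxUltraContinuous T) (n : ℕ) {ε : ℝ}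
    (hε : 0 < ε) : ∃ F : Finset (QFUpperBound T n), ∀ (A : Type) [CStarAlgebra A], Models A T →
      ∀ c : Fin (n + n) → A, (∀ k, ‖c k‖ ≤ 1) → ∃ θ ∈ F, ∃ y : Fin θ.m → A,
        (∀ k, ‖y k‖ ≤ 1) ∧ θ.theta.interp A (Fin.append c y) < pmax A c + ε := by
  classical
  by_contra hcon
  push Not at hcon
  have hcon' : ∀ F : Finset (QFUpperBound T n), ∃ (A : Type) (_ : CStarAlgebra A), Models A T ∧
      ∃ c : Fin (n + n) → A, (∀ k, ‖c k‖ ≤ 1) ∧ ∀ θ ∈ F, ∀ y : Fin θ.m → A,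
        (∀ k, ‖y k‖ ≤ 1) → pmax A c + ε ≤ θ.theta.interp A (Fin.append c y) := hcon
  choose C inst hC c hc hle using hcon'
  let U : Ultrafilter (Finset (QFUpperBound T n)) := Ultrafilter.of atTop
  have hU : ↑U ≤ (atTop : Filter (Finset (QFUpperBound T n))) := Ultrafilter.of_le _
  obtain ⟨B, _, π, hπ⟩ := exists_ultraproduct U C
  let c' : Fin (n + n) → ∀ F, C F := fun k F => c F k
  have hc' : ∀ k F, ‖c' k F‖ ≤ 1 := fun k F => hc F k
  obtain ⟨θ, y, hy, hθ⟩ := exists_qfUpperBound (T := T) hT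
    (c := fun k => π (c' k)) (fun k => hπ.norm_le_one (hc' k)) (half_pos hε)
  choose z hz hzy using fun k => hπ.exists_lift (hy k)
  have hlim := hπ.tendsto_interp θ.theta (a := Fin.append c' z) (by
    intro k F
    induction k using Fin.addCases with
    | left k => simpa using hc' k F
    | right k => simpa using hz k F)
  have e1 : ∀ F, (fun k => Fin.append c' z k F) = Fin.append (c F) (fun k => z k F) := by
    intro F
    funext k
    induction k using Fin.addCases with
    | left k => simp [c']
    | right k => simp
  have e2 : (fun k => π (Fin.append c' z k)) = Fin.append (fun k => π (c' k)) y := by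
    funext k
    induction k using Fin.addCases with
    | left k => simp
    | right k => simp [hzy]
  simp only [e1, e2] at hlim
  have hP := (hT.tendsto_pmax hC hπ hc').add_const ε
  have : pmax B (fun k => π (c' k)) + ε ≤ θ.theta.interp B (Fin.append (fun k => π (c' k)) y) := by
    refine le_of_tendsto_of_tendsto hP hlim ?_
    filter_upwards [hU (mem_atTop ({θ} : Finset (QFUpperBound T n)))] with F hF
    exact hle F θ (hF (Finset.mem_singleton_self _)) _ fun k => hz k F
  linarith

/-! ### Existential formulas -/

/-- Prefixing a formula with `inf`-quantifiers over its last `m` variables. -/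
def Formula.exInf {N : ℕ} : ∀ m : ℕ, Formula (N + m) → Formula N
  | 0, phi => phi
  | m + 1, phi => Formula.exInf m (Formula.inf phi)

theorem Formula.isExistential_exInf {N m : ℕ} {phi : Formula (N + m)} (h : phi.IsExistential) :
    (phi.exInf m).IsExistential := by
  induction m with
  | zero => exact h
  | succ m ih => exact ih h.inf

theorem Formula.exInf_le {N m : ℕ} (phi : Formula (N + m)) {A : Type} [CStarAlgebra A]
    {a : Fin N → A} (ha : ∀ k, ‖a k‖ ≤ 1) {y : Fin m → A} (hy : ∀ k, ‖y k‖ ≤ 1) :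
    (phi.exInf m).interp A a ≤ phi.interp A (Fin.append a y) := by
  induction m with
  | zero =>
    rw [show Fin.append a y = a from by rw [Subsingleton.elim y Fin.elim0]; simp]
    exact le_rfl
  | succ m ih =>
    refine (ih (Formula.inf phi) (y := Fin.init y) fun k => hy _).trans ?_
    refine (phi.inf_le_interp (norm_append_le ha fun k => hy _) (hy (Fin.last m))).trans ?_
    rw [← Fin.append_snoc]
    exact (congrArg (fun z => phi.interp A (Fin.append a z)) (Fin.snoc_init_self y)).le

theorem Formula.le_exInf {N m : ℕ} (phi : Formula (N + m)) {A : Type} [CStarAlgebra A]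
    {a : Fin N → A} {C : ℝ}
    (h : ∀ y : Fin m → A, (∀ k, ‖y k‖ ≤ 1) → C ≤ phi.interp A (Fin.append a y)) :
    C ≤ (phi.exInf m).interp A a := by
  induction m with
  | zero =>
    have := h Fin.elim0 (fun k => k.elim0)
    rwa [show Fin.append a Fin.elim0 = a from by simp] at this
  | succ m ih =>
    refine ih (Formula.inf phi) fun y hy => ?_
    rw [Formula.interp]
    refine le_ciInf fun b => ?_
    rw [← Fin.append_snoc]
    exact h _ (norm_snoc_le hy b.2)

/-- Minima of finitely many quantifier-free formulas (truncated at a constant `K`) are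
quantifier-free. -/
theorem exists_qf_min {N : ℕ} (K : ℝ) {ι : Type} (F : Finset ι) (psi : ι → Formula N)
    (hqf : ∀ j, (psi j).IsQF) : ∃ phi : Formula N, phi.IsQF ∧
      ∀ (A : Type) [CStarAlgebra A] (a : Fin N → A),
        (∀ C : ℝ, C ≤ K → (∀ j ∈ F, C ≤ (psi j).interp A a) → C ≤ phi.interp A a) ∧
        ∀ j ∈ F, phi.interp A a ≤ (psi j).interp A a := by
  classical
  induction F using Finset.induction_on with
  | empty =>
    refine ⟨.comb (k := 0) (fun _ => K) continuous_const Fin.elim0, .comb _ _ _ fun j => j.elim0,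
      fun A _ a => ⟨fun C hC _ => ?_, by simp⟩⟩
    simpa only [Formula.interp] using hC
  | insert i F _ ih =>
    obtain ⟨phi, hphi, h⟩ := ih
    refine ⟨.comb (k := 2) (fun s => min (s 0) (s 1)) (by fun_prop) ![psi i, phi],
      .comb _ _ _ (Fin.forall_fin_two.mpr ⟨hqf i, hphi⟩), fun A _ a => ?_⟩
    simp only [Formula.interp, Matrix.cons_val_zero, Matrix.cons_val_one]
    refine ⟨fun C hC hj => le_min (hj i (Finset.mem_insert_self _ _)) ((h A a).1 C hC fun j hjF =>
      hj j (Finset.mem_insert_of_mem hjF)), fun j hj => ?_⟩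
    rcases Finset.mem_insert.mp hj with rfl | hj
    · exact min_le_left _ _
    · exact (min_le_right _ _).trans ((h A a).2 j hj)

theorem exists_existential {T : CStarTheory} (hT : MaxUltraContinuous T) (n : ℕ) {ε : ℝ}
    (hε : 0 < ε) : ∃ phi : Formula (n + n), phi.IsExistential ∧
      ∀ (A : Type) [CStarAlgebra A], Models A T → ∀ c : Fin (n + n) → A, (∀ k, ‖c k‖ ≤ 1) →
        |pmax A c - phi.interp A c| ≤ ε := by
  obtain ⟨F, hF⟩ := exists_finite_upperBounds hT n hε
  let M := F.sup QFUpperBound.m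
  -- all the bounds are brought to the same number `M` of auxiliary variables, so that the
  -- minimum commutes with the infimum over these variables
  have hpad : ∀ θ : QFUpperBound T n, ∃ psi : Formula (n + n + M), psi.IsQF ∧ (θ ∈ F →
      ∃ hle : θ.m ≤ M, ∀ (A : Type) [CStarAlgebra A] (c : Fin (n + n) → A) (y : Fin M → A),
        psi.interp A (Fin.append c y)
          = θ.theta.interp A (Fin.append c fun j => y (Fin.castLE hle j))) := by
    intro θ
    by_cases hθ : θ ∈ F
    · have hle : θ.m ≤ M := Finset.le_sup (f := QFUpperBound.m) hθ
      obtain ⟨psi, hpsi, h⟩ := θ.isQF.exists_rename (n := n + n + M)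
        (Fin.addCases (fun i => Fin.castAdd _ i) fun j => Fin.natAdd _ (Fin.castLE hle j))
      refine ⟨psi, hpsi, fun _ => ⟨hle, fun A _ c y => ?_⟩⟩
      rw [h]
      congr 1
      funext k
      induction k using Fin.addCases with
      | left k => simp
      | right k => simp
    · exact ⟨.atom .one, .atom _, fun h => absurd h hθ⟩
  choose psi hqf hpsi using hpad
  obtain ⟨phi, hphi, hmin⟩ := exists_qf_min (n : ℝ) F psi hqf
  refine ⟨phi.exInf M, Formula.isExistential_exInf (.of_qf hphi), fun A _ hA c hc => ?_⟩
  have h1 : pmax A c ≤ (phi.exInf M).interp A c := by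
    refine phi.le_exInf fun y hy => (hmin A _).1 _ (pmax_le hc) fun θ hθ => ?_
    obtain ⟨hle, h⟩ := hpsi θ hθ
    rw [h]
    exact θ.le A hA c _ hc fun k => hy _
  have h2 : (phi.exInf M).interp A c ≤ pmax A c + ε := by
    obtain ⟨θ, hθ, y, hy, hlt⟩ := hF A hA c hc
    obtain ⟨hle, h⟩ := hpsi θ hθ
    let y' : Fin M → A := fun j => if hj : j.1 < θ.m then y ⟨j.1, hj⟩ else 0
    have hy' : ∀ k, ‖y' k‖ ≤ 1 := by
      intro k
      simp only [y']
      split_ifs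
      · exact hy _
      · simp
    refine (phi.exInf_le hc hy').trans (((hmin A _).2 θ hθ).trans ?_)
    rw [h, show (fun j => y' (Fin.castLE hle j)) = y from by funext j; simp [y']]
    exact hlt.le
  rw [abs_le]
  constructor <;> linarith

/-! ### Definability implies continuity along ultraproducts -/

/-- Definable predicates commute with ultraproducts, by Łoś's theorem. -/
theorem MaxDefinableOver.maxUltraContinuous {T : CStarTheory} (h : MaxDefinableOver T) :
    MaxUltraContinuous T := by
  intro I U A _ hA B _ π hπ n f g hf hg
  have hB : Models B T := hπ.models hA
  rw [Metric.tendsto_nhds]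
  intro ε hε
  obtain ⟨phi, hphi⟩ := h n (ε / 4) (by positivity)
  have hlim := hπ.tendsto_interp phi (a := Fin.append f g) (by
    intro k i
    induction k using Fin.addCases with
    | left k => simpa only [Fin.append_left] using hf k i
    | right k => simpa only [Fin.append_right] using hg k i)
  have e1 : ∀ i, (fun k => Fin.append f g k i)
      = Fin.append (fun k => f k i) (fun k => g k i) := by
    intro i
    funext k
    induction k using Fin.addCases with
    | left k => simp only [Fin.append_left]
    | right k => simp only [Fin.append_right]
  have e2 : (fun k => π (Fin.append f g k)) = Fin.append (fun k => π (f k)) fun k => π (g k) := by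
    funext k
    induction k using Fin.addCases with
    | left k => simp only [Fin.append_left]
    | right k => simp only [Fin.append_right]
  simp only [e1, e2] at hlim
  have hb := abs_le.mp (hphi B hB _ _ (fun k => hπ.norm_le_one (hf k))
    fun k => hπ.norm_le_one (hg k))
  filter_upwards [Metric.tendsto_nhds.mp hlim (ε / 4) (by positivity)] with i hi
  have ha := abs_le.mp (hphi (A i) (hA i) (fun k => f k i) (fun k => g k i)
    (fun k => hf k i) fun k => hg k i)
  rw [Real.dist_eq, abs_lt] at hi ⊢
  constructor <;> linarith [ha.1, ha.2, hb.1, hb.2, hi.1, hi.2]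

/-- Let `T` be a theory of unital C*-algebras.  The maximal tensor
norm predicate `P^max` is `T`-definable if and only if it commutes with ultraproducts of
models of `T`, and in this case each `P^max_n` is `T`-equivalent to an existential
`T`-formula (i.e. it is realized by existential formulas up to arbitrarily small error,
uniformly over models of `T`). -/
theorem maxNorm_definable_iff (T : CStarTheory) :
    (MaxDefinableOver T ↔ MaxUltraContinuous T) ∧
    (MaxDefinableOver T →
      ∀ (n : ℕ) (ε : ℝ), 0 < ε → ∃ phi : Formula (n + n), phi.IsExistential ∧
        ∀ (A : Type) [CStarAlgebra A], Models A T →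
          ∀ a b : Fin n → A, (∀ k, ‖a k‖ ≤ 1) → (∀ k, ‖b k‖ ≤ 1) →
            |maxNorm A A (∑ k, a k ⊗ₜ[ℂ] b k) - phi.interp A (Fin.append a b)| ≤ ε) := by
  have hex : MaxUltraContinuous T → ∀ (n : ℕ) (ε : ℝ), 0 < ε →
      ∃ phi : Formula (n + n), phi.IsExistential ∧
        ∀ (A : Type) [CStarAlgebra A], Models A T →
          ∀ a b : Fin n → A, (∀ k, ‖a k‖ ≤ 1) → (∀ k, ‖b k‖ ≤ 1) →
            |maxNorm A A (∑ k, a k ⊗ₜ[ℂ] b k) - phi.interp A (Fin.append a b)| ≤ ε := by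
    intro hT n ε hε
    obtain ⟨phi, hphi, h⟩ := exists_existential hT n hε
    refine ⟨phi, hphi, fun A _ hA a b ha hb => ?_⟩
    rw [← pmax_append]
    exact h A hA _ (norm_append_le ha hb)
  refine ⟨⟨fun h => h.maxUltraContinuous, fun hT n ε hε => ?_⟩,
    fun h => hex h.maxUltraContinuous⟩
  obtain ⟨phi, -, h⟩ := hex hT n ε hε
  exact ⟨phi, h⟩

end
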